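/- For every integer N ≥ 2 and every real q with 0 < q < 1: (∑ over n ∈ ℤ^N of q^((1/2)·∑_{j=1}^N (n_j + (N−j+1)/(2N))²)) · ∏_{k=1}^∞ (1 + q^(k−1/2)) / ∏_{k=1}^∞ (1−q^k)^N equals q^((N+1)(2N+1)/(48N)) · 2 · ∏_{k=1}^∞ (1 + q^k) / ∏_{k=1}^∞ (1 − q^((2k−1)/(2N))). -/

import Mathlib

open scoped BigOperators

/-!
The lattice sum factors over `ℤ ^ N` into shifted theta series
`∑ n, q ^ ((n + a) ^ 2 / 2)` with `a = (N - j) / (2 * N)`. By the Jacobi triple product, the theta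
series is a power of `q` times `∏ (1 - q ^ (k + 1))` times the twisted fermion products
`F (1 / 2 + a) * F (1 / 2 - a)`, where `F b = ∏ (1 + q ^ (k + b))`. The shifts `1 / 2 ± a` are
`(2 * N - j) / (2 * N)` and `j / (2 * N)`, so together with the Neveu–Schwarz product `F (1 / 2)`
they exhaust `0, 1 / (2 * N), …, 1`. Multiplying `F` over the `2 * N` residues below `1` gives
`∏ (1 + p ^ k)` with `p = q ^ (1 / (2 * N))`; its factor at `k = 0` is the `2` of the theorem, and
Euler's identity turns the rest into `1 / ∏ (1 - p ^ (2 * k + 1))`.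

The triple product itself is the limit of its finite form, in which Gaussian binomial coefficients
replace the constant `1 / ∏ (1 - q ^ (2 * (k + 1)))`.
-/

open Filter Finset Topology

section FiniteAndInfiniteProducts

theorem prod_range_mul_sub_mul_self {M : Type*} [CommMonoid M] (N : ℕ) (f : ℕ → M) :
    (∏ j ∈ range N, f (2 * N - j) * f j) * f N = ∏ s ∈ range (2 * N + 1), f s := by
  have upper_half : ∏ j ∈ range N, f (2 * N - j) = ∏ j ∈ range N, f (N + 1 + j) := by
    rw [← prod_range_reflect]
    refine prod_congr rfl fun j hj ↦ ?_
    have := mem_range.1 hj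
    congr 1
    lia
  rw [prod_mul_distrib, upper_half, mul_assoc, ← prod_range_succ, mul_comm, ← prod_range_add]
  congr 2
  ring

theorem six_mul_sum_range_sub_sq {R : Type*} [CommRing R] (n : ℕ) :
    6 * ∑ j ∈ range n, ((n : R) - j) ^ 2 = n * (n + 1) * (2 * n + 1) := by
  induction n with
  | zero => simp
  | succ n ih =>
    rw [sum_range_succ', mul_add]
    simp only [Nat.cast_add_one, add_sub_add_right_eq_sub, ih]
    push_cast
    ring

theorem prod_range_tprod_mul_add {M : Type*} [CommMonoid M] [TopologicalSpace M] [ContinuousMul M]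
    [T2Space M] {f : ℕ → M} {N : ℕ} (hN : N ≠ 0) (hf : Multipliable f)
    (hf' : ∀ s < N, Multipliable fun m ↦ f (N * m + s)) :
    ∏ s ∈ range N, ∏' m, f (N * m + s) = ∏' k, f k := by
  have residues := tendsto_finsetProd (range N) fun s hs ↦
    (hf' s (mem_range.1 hs)).hasProd.tendsto_prod_nat
  have all := hf.hasProd.tendsto_prod_nat.comp
    (tendsto_id.const_mul_atTop' (Nat.pos_of_ne_zero hN))
  refine tendsto_nhds_unique residues (all.congr fun n ↦ ?_)
  simp only [Function.comp_apply, id]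
  rw [Finset.prod_comm]
  induction n with
  | zero => simp
  | succ n ih => rw [prod_range_succ, ← ih, Nat.mul_succ, prod_range_add]

theorem summable_norm_prod_pi {R : Type*} [NormedCommRing R] {n : ℕ} {β : Fin n → Type*}
    {f : ∀ i, β i → R} (hf : ∀ i, Summable fun b ↦ ‖f i b‖) :
    Summable fun x : ∀ i, β i ↦ ‖∏ i, f i (x i)‖ := by
  induction n with
  | zero => exact Summable.of_finite
  | succ n ih =>
    rw [← (Fin.consEquiv β).summable_iff]
    simpa [Function.comp_def, Fin.prod_univ_succ] using (hf 0).mul_norm (ih fun i ↦ hf i.succ)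

theorem tsum_prod_pi {R : Type*} [NormedCommRing R] [CompleteSpace R] {n : ℕ} {β : Fin n → Type*}
    {f : ∀ i, β i → R} (hf : ∀ i, Summable fun b ↦ ‖f i b‖) :
    ∑' x : ∀ i, β i, ∏ i, f i (x i) = ∏ i, ∑' b, f i b := by
  induction n with
  | zero => simp
  | succ n ih =>
    rw [← (Fin.consEquiv β).tsum_eq, Fin.prod_univ_succ, ← ih fun i ↦ hf i.succ,
      tsum_mul_tsum_of_summable_norm (hf 0) (summable_norm_prod_pi fun i ↦ hf i.succ)]
    simp [Fin.prod_univ_succ]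

end FiniteAndInfiniteProducts

section GeometricProducts

variable {𝕜 : Type*} [NormedField 𝕜] {q : 𝕜}

theorem one_sub_pow_succ_ne_zero (hq : ‖q‖ < 1) (k : ℕ) : 1 - q ^ (k + 1) ≠ 0 := by
  refine sub_ne_zero.2 fun h ↦ ?_
  have : ‖q ^ (k + 1)‖ < 1 := by
    rw [norm_pow]
    exact pow_lt_one₀ (norm_nonneg q) hq k.succ_ne_zero
  simp [← h] at this

variable [CompleteSpace 𝕜]

theorem multipliable_one_add_mul_pow (hq : ‖q‖ < 1) (c : 𝕜) {g : ℕ → ℕ} (hg : g.Injective) :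
    Multipliable fun k ↦ 1 + c * q ^ g k := by
  refine multipliable_one_add_of_summable ?_
  simp only [norm_mul, norm_pow]
  exact ((summable_geometric_of_lt_one (norm_nonneg q) hq).comp_injective hg).mul_left _

theorem multipliable_one_sub_pow_succ (hq : ‖q‖ < 1) : Multipliable fun k ↦ 1 - q ^ (k + 1) := by
  simpa [sub_eq_add_neg] using multipliable_one_add_mul_pow hq (-1) (add_left_injective 1)

theorem tprod_one_sub_pow_succ_ne_zero (hq : ‖q‖ < 1) : ∏' k : ℕ, (1 - q ^ (k + 1)) ≠ 0 := by
  simp only [sub_eq_add_neg]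
  refine tprod_one_add_ne_zero_of_summable (fun k ↦ ?_) ?_
  · rw [← sub_eq_add_neg]
    exact one_sub_pow_succ_ne_zero hq k
  · simp only [norm_neg, norm_pow]
    exact (summable_geometric_of_lt_one (norm_nonneg q) hq).comp_injective (add_left_injective 1)

theorem tprod_one_add_pow_succ_eq_inv_tprod_odd (hq : ‖q‖ < 1) :
    ∏' k : ℕ, (1 + q ^ (k + 1)) = (∏' k : ℕ, (1 - q ^ (2 * k + 1)))⁻¹ := by
  have plus : Multipliable fun k ↦ 1 + q ^ (k + 1) := by
    simpa using multipliable_one_add_mul_pow hq 1 (add_left_injective 1)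
  have odd : Multipliable fun k ↦ 1 - q ^ (2 * k + 1) := by
    simpa [sub_eq_add_neg] using multipliable_one_add_mul_pow hq (-1) (g := fun k ↦ 2 * k + 1)
      fun _ _ h ↦ by simpa using h
  have difference_of_squares (k : ℕ) :
      (1 + q ^ (k + 1)) * (1 - q ^ (k + 1)) = 1 - q ^ (2 * k + 1 + 1) := by ring
  have minus := multipliable_one_sub_pow_succ hq
  have even : Multipliable fun k ↦ 1 - q ^ (2 * k + 1 + 1) :=
    (plus.mul minus).congr difference_of_squares
  refine eq_inv_of_mul_eq_one_left (mul_right_cancel₀ (tprod_one_sub_pow_succ_ne_zero hq) ?_)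
  calc (∏' k : ℕ, (1 + q ^ (k + 1))) * (∏' k : ℕ, (1 - q ^ (2 * k + 1))) *
        ∏' k : ℕ, (1 - q ^ (k + 1))
      = (∏' k : ℕ, (1 - q ^ (2 * k + 1))) *
          ((∏' k : ℕ, (1 + q ^ (k + 1))) * ∏' k : ℕ, (1 - q ^ (k + 1))) := by ring
    _ = (∏' k : ℕ, (1 - q ^ (2 * k + 1))) * ∏' k : ℕ, (1 - q ^ (2 * k + 1 + 1)) := by
      rw [← plus.tprod_mul minus]
      simp only [difference_of_squares]
    _ = 1 * ∏' k : ℕ, (1 - q ^ (k + 1)) := by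
      rw [tprod_even_mul_odd (f := fun k ↦ 1 - q ^ (k + 1)) odd even, one_mul]

theorem prod_range_tprod_one_add_pow (hq : ‖q‖ < 1) {M : ℕ} (hM : M ≠ 0) :
    ∏ s ∈ range M, ∏' m : ℕ, (1 + q ^ (M * m + s)) = 2 / ∏' k : ℕ, (1 - q ^ (2 * k + 1)) := by
  have multipliable (g : ℕ → ℕ) (hg : g.Injective) : Multipliable fun k ↦ 1 + q ^ g k := by
    simpa only [one_mul] using multipliable_one_add_mul_pow hq 1 hg
  have residue (s : ℕ) : Function.Injective fun m ↦ M * m + s :=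
    (add_left_injective s).comp (mul_right_injective₀ hM)
  calc ∏ s ∈ range M, ∏' m : ℕ, (1 + q ^ (M * m + s))
      = ∏' k : ℕ, (1 + q ^ k) :=
        prod_range_tprod_mul_add hM (f := fun k ↦ 1 + q ^ k)
          (multipliable id Function.injective_id) fun s _ ↦ multipliable _ (residue s)
    _ = (1 + q ^ 0) * ∏' k : ℕ, (1 + q ^ (k + 1)) :=
        tprod_eq_zero_mul' (multipliable _ (add_left_injective 1))
    _ = 2 / ∏' k : ℕ, (1 - q ^ (2 * k + 1)) := by
        rw [tprod_one_add_pow_succ_eq_inv_tprod_odd hq, pow_zero, one_add_one_eq_two,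
          div_eq_mul_inv]

end GeometricProducts

section QPochhammer

variable {F : Type*} [Field F]

/-- The finite `q`-Pochhammer symbol `(q; q)_n`. -/
def qPochhammer (q : F) (n : ℕ) : F := ∏ k ∈ range n, (1 - q ^ (k + 1))

/-- The reciprocal `1 / (q; q)_i`, with the usual convention that it vanishes for `i < 0`. -/
def invQPochhammer (q : F) : ℤ → F
  | (n : ℕ) => (qPochhammer q n)⁻¹
  | .negSucc _ => 0

/-- The Gaussian binomial coefficient `[m + n choose m - j]_q`, which vanishes unless
`-n ≤ j ≤ m`. Indexing by `m`, `n`, `j` makes it the `j`-th coefficient of the Laurent polynomial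
`∏_{k < m} (1 + z * q ^ (k + 1 / 2)) * ∏_{k < n} (1 + z⁻¹ * q ^ (k + 1 / 2))`, up to the factor
`q ^ (j ^ 2 / 2)`. -/
def gaussBinom (q : F) (m n : ℕ) (j : ℤ) : F :=
  qPochhammer q (m + n) * invQPochhammer q (m - j) * invQPochhammer q (n + j)

variable {q : F}

theorem qPochhammer_succ (q : F) (n : ℕ) :
    qPochhammer q (n + 1) = qPochhammer q n * (1 - q ^ (n + 1)) :=
  prod_range_succ _ _

theorem invQPochhammer_sub_one (hq : ∀ k : ℕ, 1 - q ^ (k + 1) ≠ 0) (i : ℤ) :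
    invQPochhammer q (i - 1) = (1 - q ^ i) * invQPochhammer q i := by
  match i with
  | (0 : ℕ) =>
    change invQPochhammer q (.negSucc 0) = _
    simp [invQPochhammer]
  | (k + 1 : ℕ) =>
    have hk := hq k
    rw [show ((k + 1 : ℕ) : ℤ) - 1 = (k : ℕ) by simp, zpow_natCast]
    simp only [invQPochhammer, qPochhammer_succ, mul_inv]
    field_simp
  | .negSucc k =>
    rw [show Int.negSucc k - 1 = .negSucc (k + 1) by lia]
    simp [invQPochhammer]

theorem gaussBinom_neg (q : F) (m n : ℕ) (j : ℤ) : gaussBinom q m n (-j) = gaussBinom q n m j := by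
  simp only [gaussBinom, sub_neg_eq_add, ← sub_eq_add_neg, add_comm m n]
  ring

theorem gaussBinom_zero_zero (q : F) (j : ℤ) : gaussBinom q 0 0 j = if j = 0 then 1 else 0 := by
  match j with
  | (0 : ℕ) => simp [gaussBinom, invQPochhammer, qPochhammer]
  | (k + 1 : ℕ) =>
    have : -((k : ℤ) + 1) = .negSucc k := rfl
    simp [gaussBinom, invQPochhammer, this, Nat.cast_add_one_ne_zero]
  | .negSucc k => simp [gaussBinom, invQPochhammer]

theorem gaussBinom_succ_left (hq₀ : q ≠ 0) (hq : ∀ k : ℕ, 1 - q ^ (k + 1) ≠ 0) (m n : ℕ)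
    (j : ℤ) :
    gaussBinom q (m + 1) n j =
      gaussBinom q m n j + q ^ (m + 1 - j) * gaussBinom q m n (j - 1) := by
  have lower := invQPochhammer_sub_one hq (m + 1 - j)
  have upper := invQPochhammer_sub_one hq (n + j)
  have exponents : q ^ (m + n + 1) = q ^ (m + 1 - j) * q ^ (n + j) := by
    rw [← zpow_add₀ hq₀, ← zpow_natCast]
    push_cast
    ring_nf
  rw [gaussBinom, gaussBinom, gaussBinom, show m + 1 + n = m + n + 1 by ring, qPochhammer_succ,
    exponents, show (m : ℤ) - j = m + 1 - j - 1 by ring, lower,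
    show (n : ℤ) + (j - 1) = n + j - 1 by ring, upper]
  push_cast
  ring_nf

end QPochhammer

section FiniteTheta

variable {F : Type*} [Field F]

/-- The `j`-th term of the Laurent polynomial
`∏_{k < m} (1 + z * q ^ (2 * k + 1)) * ∏_{k < n} (1 + z⁻¹ * q ^ (2 * k + 1))`. -/
def finiteThetaTerm (q z : F) (m n : ℕ) (j : ℤ) : F :=
  gaussBinom (q ^ 2) m n j * (q ^ (j ^ 2) * z ^ j)

variable {q z : F}

theorem finiteThetaTerm_neg (q z : F) (m n : ℕ) (j : ℤ) :
    finiteThetaTerm q z m n (-j) = finiteThetaTerm q z⁻¹ n m j := by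
  simp only [finiteThetaTerm, gaussBinom_neg, neg_sq, zpow_neg, inv_zpow]

theorem finiteThetaTerm_succ_left (hq₀ : q ≠ 0) (hq : ∀ k : ℕ, 1 - (q ^ 2) ^ (k + 1) ≠ 0)
    (hz : z ≠ 0) (m n : ℕ) (j : ℤ) :
    finiteThetaTerm q z (m + 1) n j =
      finiteThetaTerm q z m n j + z * q ^ (2 * m + 1) * finiteThetaTerm q z m n (j - 1) := by
  have q_exponents : (q ^ 2) ^ (m + 1 - j) * q ^ (j ^ 2) = q ^ (2 * m + 1) * q ^ ((j - 1) ^ 2) := by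
    rw [← zpow_natCast q (2 * m + 1), ← zpow_natCast q 2, ← zpow_mul, ← zpow_add₀ hq₀,
      ← zpow_add₀ hq₀]
    push_cast
    ring_nf
  have z_exponents : z ^ j = z * z ^ (j - 1) := by rw [← zpow_one_add₀ hz, add_sub_cancel]
  simp only [finiteThetaTerm, gaussBinom_succ_left (pow_ne_zero 2 hq₀) hq]
  linear_combination gaussBinom (q ^ 2) m n (j - 1) *
    (z ^ j * q_exponents + q ^ (2 * m + 1) * q ^ ((j - 1) ^ 2) * z_exponents)

end FiniteTheta

section QPochhammerLimits

variable {𝕜 : Type*} [NormedField 𝕜] [CompleteSpace 𝕜] {q : 𝕜}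

theorem tendsto_qPochhammer (hq : ‖q‖ < 1) :
    Tendsto (qPochhammer q) atTop (𝓝 (∏' k : ℕ, (1 - q ^ (k + 1)))) :=
  (multipliable_one_sub_pow_succ hq).hasProd.tendsto_prod_nat

theorem tendsto_invQPochhammer (hq : ‖q‖ < 1) :
    Tendsto (invQPochhammer q) atTop (𝓝 (∏' k : ℕ, (1 - q ^ (k + 1)))⁻¹) := by
  rw [← Nat.map_cast_int_atTop, tendsto_map'_iff]
  exact (tendsto_qPochhammer hq).inv₀ (tprod_one_sub_pow_succ_ne_zero hq)

theorem tendsto_gaussBinom (hq : ‖q‖ < 1) (j : ℤ) :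
    Tendsto (fun n ↦ gaussBinom q n n j) atTop (𝓝 (∏' k : ℕ, (1 - q ^ (k + 1)))⁻¹) := by
  have numerator := (tendsto_qPochhammer hq).comp (tendsto_id.atTop_add_atTop tendsto_id)
  have left := (tendsto_invQPochhammer hq).comp
    (tendsto_atTop_add_const_right atTop (-j) tendsto_natCast_atTop_atTop)
  have right := (tendsto_invQPochhammer hq).comp
    (tendsto_atTop_add_const_right atTop j tendsto_natCast_atTop_atTop)
  convert! (numerator.mul left).mul right using 2
  rw [mul_inv_cancel₀ (tprod_one_sub_pow_succ_ne_zero hq), one_mul]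

theorem exists_norm_gaussBinom_le (hq : ‖q‖ < 1) : ∃ C, ∀ m n j, ‖gaussBinom q m n j‖ ≤ C := by
  obtain ⟨A, hA⟩ := (tendsto_qPochhammer hq).norm.bddAbove_range
  obtain ⟨B, hB⟩ :=
    ((tendsto_invQPochhammer hq).comp tendsto_natCast_atTop_atTop).norm.bddAbove_range
  rw [mem_upperBounds, Set.forall_mem_range] at hA hB
  have hA₀ : 0 ≤ A := (norm_nonneg _).trans (hA 0)
  have hB₀ : 0 ≤ B := (norm_nonneg _).trans (hB 0)
  have hB' (i : ℤ) : ‖invQPochhammer q i‖ ≤ B := by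
    match i with
    | (n : ℕ) => exact hB n
    | .negSucc _ => simpa [invQPochhammer] using hB₀
  refine ⟨A * B * B, fun m n j ↦ ?_⟩
  rw [gaussBinom, norm_mul, norm_mul]
  gcongr
  exacts [hA _, hB' _, hB' _]

end QPochhammerLimits

section JacobiTripleProduct

variable {𝕜 : Type*} [NormedField 𝕜] {q z : 𝕜}

theorem norm_sq_lt_one (hq : ‖q‖ < 1) : ‖q ^ 2‖ < 1 := by
  rw [norm_pow]
  exact pow_lt_one₀ (norm_nonneg q) hq two_ne_zero

theorem hasSum_finiteThetaTerm (hq₀ : q ≠ 0) (hq : ‖q‖ < 1) (hz : z ≠ 0) (m n : ℕ) :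
    HasSum (finiteThetaTerm q z m n)
      ((∏ k ∈ range m, (1 + z * q ^ (2 * k + 1))) *
        ∏ k ∈ range n, (1 + z⁻¹ * q ^ (2 * k + 1))) := by
  have succ_left {z : 𝕜} {m n : ℕ} {P P' : 𝕜} (hz : z ≠ 0)
      (h : HasSum (finiteThetaTerm q z m n) (P * P')) :
      HasSum (finiteThetaTerm q z (m + 1) n) (P * (1 + z * q ^ (2 * m + 1)) * P') := by
    convert! h.add (((Equiv.subRight (1 : ℤ)).hasSum_iff.2 h).mul_left (z * q ^ (2 * m + 1)))
      using 1
    · exact funext (finiteThetaTerm_succ_left hq₀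
        (one_sub_pow_succ_ne_zero (norm_sq_lt_one hq)) hz m n)
    · ring
  have swap {z : 𝕜} {m n : ℕ} {P : 𝕜} (h : HasSum (finiteThetaTerm q z m n) P) :
      HasSum (finiteThetaTerm q z⁻¹ n m) P := by
    convert! (Equiv.neg ℤ).hasSum_iff.2 h using 1
    exact funext fun j ↦ (finiteThetaTerm_neg q z m n j).symm
  induction m with
  | succ m ih =>
    rw [prod_range_succ]
    exact succ_left hz ih
  | zero =>
    rw [prod_range_zero, one_mul]
    induction n with
    | zero =>
      convert! hasSum_ite_eq (0 : ℤ) (1 : 𝕜) using 1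
      funext j
      rw [finiteThetaTerm, gaussBinom_zero_zero]
      split_ifs with h <;> simp [h]
    | succ n ih =>
      rw [prod_range_succ]
      simpa using swap (succ_left (inv_ne_zero hz) (P' := 1) (by simpa using swap ih))

theorem summable_norm_pow_sq_mul_pow (hq : ‖q‖ < 1) (z : 𝕜) :
    Summable fun n : ℕ ↦ ‖q ^ (n ^ 2) * z ^ n‖ := by
  have small : ∀ᶠ n : ℕ in atTop, ‖q ^ n * z‖ < 1 / 2 := by
    have lim := ((tendsto_pow_atTop_nhds_zero_of_norm_lt_one hq).mul_const z).norm
    rw [zero_mul, norm_zero] at lim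
    exact lim.eventually_lt_const one_half_pos
  refine summable_geometric_two.of_norm_bounded_eventually_nat (small.mono fun n hn ↦ ?_)
  rw [norm_norm, sq, pow_mul, ← mul_pow, norm_pow]
  exact pow_le_pow_left₀ (norm_nonneg _) hn.le n

theorem summable_norm_zpow_sq_mul_zpow (hq : ‖q‖ < 1) (z : 𝕜) :
    Summable fun j : ℤ ↦ ‖q ^ (j ^ 2) * z ^ j‖ := by
  refine summable_int_iff_summable_nat_and_neg.2 ⟨?_, ?_⟩
  · exact_mod_cast summable_norm_pow_sq_mul_pow hq z
  · simp only [neg_sq, zpow_neg, ← inv_zpow]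
    exact_mod_cast summable_norm_pow_sq_mul_pow hq z⁻¹

theorem jacobi_triple_product [CompleteSpace 𝕜] (hq : ‖q‖ < 1) (hz : z ≠ 0) :
    ∑' j : ℤ, q ^ (j ^ 2) * z ^ j =
      (∏' k : ℕ, (1 - (q ^ 2) ^ (k + 1))) *
        ((∏' k : ℕ, (1 + z * q ^ (2 * k + 1))) * ∏' k : ℕ, (1 + z⁻¹ * q ^ (2 * k + 1))) := by
  obtain rfl | hq₀ := eq_or_ne q 0
  · rw [tsum_eq_single 0 fun j hj ↦ by simp [zero_zpow _ (pow_ne_zero 2 hj)]]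
    simp
  obtain ⟨C, hC⟩ := exists_norm_gaussBinom_le (norm_sq_lt_one hq)
  have sum_side : Tendsto (fun n ↦ ∑' j, finiteThetaTerm q z n n j) atTop
      (𝓝 (∑' j : ℤ, (∏' k : ℕ, (1 - (q ^ 2) ^ (k + 1)))⁻¹ * (q ^ (j ^ 2) * z ^ j))) := by
    refine tendsto_tsum_of_dominated_convergence
      ((summable_norm_zpow_sq_mul_zpow hq z).mul_left C)
      (fun j ↦ (tendsto_gaussBinom (norm_sq_lt_one hq) j).mul_const _)
      (.of_forall fun n j ↦ ?_)
    rw [finiteThetaTerm, norm_mul]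
    gcongr
    exact hC n n j
  have factor (c : 𝕜) := (multipliable_one_add_mul_pow hq c (g := fun k ↦ 2 * k + 1)
    fun _ _ h ↦ by simpa using h).hasProd.tendsto_prod_nat
  have product_side := (factor z).mul (factor z⁻¹)
  simp only [(hasSum_finiteThetaTerm hq₀ hq hz _ _).tsum_eq] at sum_side
  rw [← tendsto_nhds_unique sum_side product_side, tsum_mul_left,
    mul_inv_cancel_left₀ (tprod_one_sub_pow_succ_ne_zero (norm_sq_lt_one hq))]

end JacobiTripleProduct

section AddChar

variable {𝕜 : Type*} [NormedField 𝕜] {e : AddChar ℝ 𝕜}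

theorem addChar_natCast_mul (e : AddChar ℝ 𝕜) (n : ℕ) (x : ℝ) : e (n * x) = e x ^ n := by
  rw [← nsmul_eq_mul, e.map_nsmul_eq_pow]

theorem addChar_intCast_mul (e : AddChar ℝ 𝕜) (n : ℤ) (x : ℝ) : e (n * x) = e x ^ n := by
  rw [← zsmul_eq_mul, e.map_zsmul_eq_zpow]

theorem addChar_sum {ι : Type*} (e : AddChar ℝ 𝕜) (s : Finset ι) (f : ι → ℝ) :
    e (∑ i ∈ s, f i) = ∏ i ∈ s, e (f i) :=
  map_prod e.toMonoidHom (fun i ↦ Multiplicative.ofAdd (f i)) s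

theorem addChar_ne_zero (e : AddChar ℝ 𝕜) (x : ℝ) : e x ≠ 0 :=
  (e.val_isUnit x).ne_zero

theorem norm_addChar_one_div_lt_one (he : ‖e 1‖ < 1) {M : ℕ} (hM : M ≠ 0) :
    ‖e (1 / M)‖ < 1 := by
  have root : e (1 / M) ^ M = e 1 := by
    rw [← addChar_natCast_mul, mul_one_div_cancel (Nat.cast_ne_zero.2 hM)]
  rwa [← pow_lt_one_iff_of_nonneg (norm_nonneg _) hM, ← norm_pow, root]

theorem addChar_shifted_sq (e : AddChar ℝ 𝕜) (a : ℝ) (n : ℤ) :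
    e (1 / 2 * (n + a) ^ 2) = e (1 / 2 * a ^ 2) * (e (1 / 2) ^ (n ^ 2) * e a ^ n) := by
  rw [← addChar_intCast_mul, ← addChar_intCast_mul, ← e.map_add_eq_mul, ← e.map_add_eq_mul]
  push_cast
  ring_nf

theorem summable_norm_addChar_shifted_sq (he : ‖e 1‖ < 1) (a : ℝ) :
    Summable fun n : ℤ ↦ ‖e (1 / 2 * (n + a) ^ 2)‖ := by
  have half : ‖e (1 / 2)‖ < 1 := mod_cast norm_addChar_one_div_lt_one he two_ne_zero
  simp only [addChar_shifted_sq, norm_mul (e (1 / 2 * a ^ 2))]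
  exact (summable_norm_zpow_sq_mul_zpow half (e a)).mul_left _

/-- The product `∏ (1 + q ^ (k + a))` for the character `e x = q ^ x`: the graded dimension of a
free fermion whose modes have the energies `a, a + 1, a + 2, …`. -/
noncomputable def fermionProd (e : AddChar ℝ 𝕜) (a : ℝ) : 𝕜 := ∏' k : ℕ, (1 + e (k + a))

theorem prod_fermionProd_shifts (e : AddChar ℝ 𝕜) {N : ℕ} (hN : N ≠ 0) :
    (∏ j : Fin N, (fermionProd e (1 / 2 + ((N : ℝ) - j) / (2 * N)) *
        fermionProd e (1 / 2 - ((N : ℝ) - j) / (2 * N)))) * fermionProd e (1 / 2) =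
      (∏ s ∈ range (2 * N), fermionProd e (s / (2 * N : ℕ))) * fermionProd e 1 := by
  have N_cast : (N : ℝ) ≠ 0 := Nat.cast_ne_zero.2 hN
  have paired := prod_range_mul_sub_mul_self N fun s ↦ fermionProd e (s / (2 * N : ℕ))
  rw [← Fin.prod_univ_eq_prod_range
    fun j ↦ fermionProd e ((2 * N - j : ℕ) / (2 * N : ℕ)) * fermionProd e (j / (2 * N : ℕ)),
    prod_range_succ] at paired
  convert! paired using 2
  · refine prod_congr rfl fun j _ ↦ ?_
    congr 2
    · rw [Nat.cast_sub (by lia)]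
      push_cast
      field
    · push_cast
      field
  · congr 1
    push_cast
    field
  · congr 1
    push_cast
    field

theorem half_sum_shift_sq {N : ℕ} (hN : N ≠ 0) :
    1 / 2 * ∑ j : Fin N, (((N : ℝ) - j) / (2 * N)) ^ 2 =
      ((N : ℝ) + 1) * (2 * N + 1) / (48 * N) := by
  have N_cast : (N : ℝ) ≠ 0 := Nat.cast_ne_zero.2 hN
  rw [Fin.sum_univ_eq_sum_range fun j ↦ (((N : ℝ) - j) / (2 * N)) ^ 2]
  simp only [div_pow, ← sum_div]
  field_simp
  linear_combination 8 * six_mul_sum_range_sub_sq (R := ℝ) N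

variable [CompleteSpace 𝕜]

theorem tsum_addChar_shifted_sq (he : ‖e 1‖ < 1) (a : ℝ) :
    ∑' n : ℤ, e (1 / 2 * (n + a) ^ 2) =
      e (1 / 2 * a ^ 2) * (∏' k : ℕ, (1 - e (k + 1))) *
        (fermionProd e (1 / 2 + a) * fermionProd e (1 / 2 - a)) := by
  have half : ‖e (1 / 2)‖ < 1 := mod_cast norm_addChar_one_div_lt_one he two_ne_zero
  simp only [addChar_shifted_sq, tsum_mul_left]
  rw [jacobi_triple_product half (addChar_ne_zero e a), mul_assoc (e _)]
  simp only [fermionProd, ← e.map_neg_eq_inv, ← addChar_natCast_mul, ← e.map_add_eq_mul]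
  push_cast
  ring_nf

theorem tsum_pi_addChar_shifted_sq (he : ‖e 1‖ < 1) {N : ℕ} (a : Fin N → ℝ) :
    ∑' n : Fin N → ℤ, e (1 / 2 * ∑ j, (n j + a j) ^ 2) =
      e (1 / 2 * ∑ j, a j ^ 2) * (∏' k : ℕ, (1 - e (k + 1))) ^ N *
        ∏ j, (fermionProd e (1 / 2 + a j) * fermionProd e (1 / 2 - a j)) := by
  simp only [mul_sum, addChar_sum]
  rw [tsum_prod_pi (f := fun j (n : ℤ) ↦ e (1 / 2 * (n + a j) ^ 2))
    fun j ↦ summable_norm_addChar_shifted_sq he (a j)]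
  simp only [tsum_addChar_shifted_sq he, prod_mul_distrib, prod_const, card_univ, Fintype.card_fin]

theorem prod_range_fermionProd (he : ‖e 1‖ < 1) {M : ℕ} (hM : M ≠ 0) :
    ∏ s ∈ range M, fermionProd e (s / M) = 2 / ∏' k : ℕ, (1 - e ((2 * k + 1) / M)) := by
  have e_div (n : ℕ) : e (n / M) = e (1 / M) ^ n := by rw [← addChar_natCast_mul, mul_one_div]
  have fermion (s : ℕ) : fermionProd e (s / M) = ∏' m : ℕ, (1 + e (1 / M) ^ (M * m + s)) := by
    refine tprod_congr fun m ↦ ?_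
    rw [← e_div, Nat.cast_add, Nat.cast_mul, add_div,
      mul_div_cancel_left₀ _ (Nat.cast_ne_zero.2 hM)]
  have odd (k : ℕ) : e ((2 * k + 1) / M) = e (1 / M) ^ (2 * k + 1) := mod_cast e_div (2 * k + 1)
  simp only [fermion, odd]
  exact prod_range_tprod_one_add_pow (norm_addChar_one_div_lt_one he hM) hM

theorem stmt10_general (he : ‖e 1‖ < 1) {N : ℕ} (hN : N ≠ 0) :
    (∑' n : Fin N → ℤ, e (1 / 2 * ∑ j : Fin N, (n j + ((N : ℝ) - j) / (2 * N)) ^ 2)) *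
        (∏' k : ℕ, (1 + e (k + 1 / 2))) / ∏' k : ℕ, (1 - e (k + 1)) ^ N =
      e (((N : ℝ) + 1) * (2 * N + 1) / (48 * N)) * 2 *
        (∏' k : ℕ, (1 + e (k + 1))) / ∏' k : ℕ, (1 - e ((2 * k + 1) / (2 * N))) := by
  have e_succ (k : ℕ) : e (k + 1) = e 1 ^ (k + 1) := by
    rw [← addChar_natCast_mul, mul_one, Nat.cast_succ]
  have boson_pow : ∏' k : ℕ, (1 - e (k + 1)) ^ N = (∏' k : ℕ, (1 - e (k + 1))) ^ N := by
    simp only [e_succ]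
    exact (multipliable_one_sub_pow_succ he).tprod_pow N
  have boson_ne_zero : (∏' k : ℕ, (1 - e (k + 1))) ^ N ≠ 0 := by
    simp only [e_succ]
    exact pow_ne_zero N (tprod_one_sub_pow_succ_ne_zero he)
  have neveu_schwarz : ∏' k : ℕ, (1 + e (k + 1 / 2)) = fermionProd e (1 / 2) := rfl
  have ramond : ∏' k : ℕ, (1 + e (k + 1)) = fermionProd e 1 := rfl
  have fermions := prod_fermionProd_shifts e hN
  rw [prod_range_fermionProd he (Nat.mul_ne_zero two_ne_zero hN)] at fermions
  push_cast at fermions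
  rw [tsum_pi_addChar_shifted_sq he, half_sum_shift_sq hN, boson_pow, neveu_schwarz, ramond,
    mul_assoc, fermions, mul_right_comm, mul_div_cancel_right₀ _ boson_ne_zero]
  ring

end AddChar

/-- The character `x ↦ q ^ x` of the additive group of `ℝ`. -/
noncomputable def rpowAddChar {q : ℝ} (hq : 0 < q) : AddChar ℝ ℝ where
  toFun x := q ^ x
  map_zero_eq_one' := Real.rpow_zero q
  map_add_eq_mul' := Real.rpow_add hq

/-- Principal specialization character identity for `L_{Λ₀} ⊕ L_{Λ₁}` of affine
    `so(2N+1)`: the `B_N` lattice sum (shifted by `ρ̄/(2N)`, `ρ̄ = (N,…,1)`) with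
    one NS fermion equals `q^((N+1)(2N+1)/(48N)) · 2 · ∏(1+q^k)/∏(1−q^((2k−1)/(2N)))`. -/
theorem stmt10 (N : ℕ) (hN : 2 ≤ N) (q : ℝ) (hq0 : 0 < q) (hq1 : q < 1) :
    (∑' n : Fin N → ℤ,
        q ^ ((1 / 2 : ℝ) * ∑ j : Fin N, ((n j : ℝ) + ((N : ℝ) - (j.val : ℝ)) / (2 * N)) ^ 2)) *
      (∏' k : ℕ, (1 + q ^ ((k : ℝ) + 1 / 2))) / ∏' k : ℕ, (1 - q ^ (k + 1)) ^ N =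
      q ^ (((N : ℝ) + 1) * (2 * (N : ℝ) + 1) / (48 * N)) * 2 *
        (∏' k : ℕ, (1 + q ^ (k + 1))) / ∏' k : ℕ, (1 - q ^ ((2 * (k : ℝ) + 1) / (2 * N))) := by
  simp only [← Real.rpow_natCast q, Nat.cast_add_one]
  exact stmt10_general (e := rpowAddChar hq0) (by simpa [rpowAddChar, abs_of_pos hq0]) (by lia)
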